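/- For all R ≥ 1 and all y ∈ B_{T_d}(o,R), the random variable E_y^{T_d}[ φ_{T_d}(X_{H_{S_{T_d}(o,R)}}) ] (the expectation over the simple random walk started at y of the field value at the point where the walk first hits the sphere S_{T_d}(o,R), which is a centred Gaussian random variable under P^{T_d}) has variance at most (d²/((d−1)(d−2)))·(1/(d−1))^{R − 2·d_{T_d}(y,o)}. -/

import Mathlib

open MeasureTheory ProbabilityTheory Filter Set
open scoped ENNReal NNReal ENat Classical

namespace GFF

variable {V : Type*} {T : Type*}

/-- Number of ordered adjacent pairs inside `U` (twice the number of edges of the induced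
subgraph). -/
noncomputable def adjPairs (G : SimpleGraph V) (U : Set V) : ℕ :=
  Set.ncard {p : V × V | p.1 ∈ U ∧ p.2 ∈ U ∧ G.Adj p.1 p.2}

/-- `U` (assumed connected) induces a tree, i.e. has tree excess zero. -/
def TxZero (G : SimpleGraph V) (U : Set V) : Prop :=
  adjPairs G U = 2 * (Set.ncard U - 1)

/-- Closed ball of radius `R` for the graph distance. -/
def gball (G : SimpleGraph V) (x : V) (R : ℕ) : Set V := {y | G.dist x y ≤ R}

/-- Set of vertices within distance `R` of the set `A`. -/
def sball (G : SimpleGraph V) (A : Set V) (R : ℕ) : Set V := {y | ∃ a ∈ A, G.dist a y ≤ R}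

/-- Connected component containing `x` of the level set `{ω ≥ h}`. -/
def levelComp (G : SimpleGraph V) (h : ℝ) (ω : V → ℝ) (x : V) : Set V :=
  {y | ∃ p : G.Walk x y, ∀ v ∈ p.support, h ≤ ω v}

/-- `G` is `d`-regular. -/
def IsReg (G : SimpleGraph V) (d : ℕ) : Prop := ∀ v, Nat.card (G.neighborSet v) = d

/-- `G` is an infinite `d`-regular tree. -/
def IsRegTree (G : SimpleGraph V) (d : ℕ) : Prop :=
  G.Connected ∧ G.IsAcyclic ∧ IsReg G d

/-- Transition matrix of SRW on a `d`-regular graph. -/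
noncomputable def transP [Fintype V] (G : SimpleGraph V) (d : ℕ) : Matrix V V ℝ :=
  Matrix.of fun u v => if G.Adj u v then ((d : ℝ))⁻¹ else 0

/-- All non-zero eigenvalues of `I - P` are at least `β`. -/
def SpectralGapLB [Fintype V] (G : SimpleGraph V) (d : ℕ) (β : ℝ) : Prop :=
  ∀ (f : V → ℝ) (lam : ℝ),
    Matrix.mulVec ((1 : Matrix V V ℝ) - transP G d) f = lam • f → f ≠ 0 → lam = 0 ∨ β ≤ lam

/-- `P_x[X̄_t = y]` for the continuous-time SRW with i.i.d. mean-one exponential holding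
times (Poissonized jump chain). -/
noncomputable def heatK [Fintype V] (G : SimpleGraph V) (d : ℕ) (t : ℝ) (x y : V) : ℝ :=
  ∑' k : ℕ, Real.exp (-t) * t ^ k / (Nat.factorial k) * ((transP G d) ^ k) x y

/-- The zero-average Green function. -/
noncomputable def zGreen [Fintype V] (G : SimpleGraph V) (d Nn : ℕ) (x y : V) : ℝ :=
  ∫ t in Set.Ioi (0 : ℝ), (heatK G d t x y - 1 / (Nn : ℝ))

/-- Green function of SRW on the `d`-regular tree. -/
noncomputable def treeGreen (G : SimpleGraph V) (d : ℕ) (x y : V) : ℝ :=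
  (((d : ℝ) - 1) / ((d : ℝ) - 2)) * (((d : ℝ) - 1)⁻¹) ^ (G.dist x y)

/-- `μ` is the law of the centred Gaussian field with covariance `K`. -/
def IsGaussianField {I : Type*} (μ : Measure (I → ℝ)) (K : I → I → ℝ) : Prop :=
  IsProbabilityMeasure μ ∧
    ∀ c : I →₀ ℝ,
      μ.map (fun ω => ∑ i ∈ c.support, c i * ω i) =
        gaussianReal 0 (Real.toNNReal (∑ i ∈ c.support, ∑ j ∈ c.support, c i * c j * K i j))

/-- One-step transition probability of SRW. -/
noncomputable def srwStep (G : SimpleGraph V) (d : ℕ) (u v : V) : ℝ≥0∞ :=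
  if G.Adj u v then (d : ℝ≥0∞)⁻¹ else 0

/-- `W x` is the law of discrete-time SRW on `G` started at `x`. -/
def IsSRW [MeasurableSpace V] (G : SimpleGraph V) (d : ℕ) (W : V → Measure (ℕ → V)) : Prop :=
  (∀ x, IsProbabilityMeasure (W x)) ∧
    ∀ (x : V) (k : ℕ) (p : ℕ → V),
      W x {ω | ∀ i ≤ k, ω i = p i} =
        (if p 0 = x then 1 else 0) * ∏ i ∈ Finset.range k, srwStep G d (p i) (p (i + 1))

/-- Entrance time of the set `A` (`⊤` if never entered). -/
noncomputable def hitTime (A : Set V) (ω : ℕ → V) : ℕ∞ :=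
  sInf ((Nat.cast : ℕ → ℕ∞) '' {k | ω k ∈ A})

/-- Exit time of the set `U`. -/
noncomputable def exitTime (U : Set V) (ω : ℕ → V) : ℕ∞ := hitTime Uᶜ ω

/-- Position of the walk at the entrance time of `A`. -/
noncomputable def stopAt (A : Set V) (ω : ℕ → V) : V := ω (hitTime A ω).toNat

/-- `π` is a cover tree of `G` at `x`. -/
def IsCoverMap (Gt : SimpleGraph T) (G : SimpleGraph V) (o : T) (x : V) (π : T → V) : Prop :=
  π o = x ∧ Function.Surjective π ∧ ∀ y : T, π '' (Gt.neighborSet y) = G.neighborSet (π y)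

/-- `T_d^+`: the vertices of the tree whose geodesic to `o` avoids the fixed neighbour
`obar` of `o`. -/
def treePlus (Gt : SimpleGraph T) (o obar : T) : Set T :=
  {z | Gt.dist z obar = Gt.dist z o + 1}

/-- `S^+_{T_d}(o,R)`. -/
def spherePlus (Gt : SimpleGraph T) (o obar : T) (R : ℕ) : Set T :=
  {z | z ∈ treePlus Gt o obar ∧ Gt.dist o z = R}

/-- The critical value for level-set percolation on the tree (w.r.t. the law `μT`). -/
noncomputable def hstar (Gt : SimpleGraph T) (o : T) (μT : Measure (T → ℝ)) : ℝ :=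
  sInf {h : ℝ | μT {ω | (levelComp Gt h ω o).Infinite} = 0}

/-- The forward percolation probability `η⁺(h)`. -/
noncomputable def etaPlus (Gt : SimpleGraph T) (o obar : T) (μT : Measure (T → ℝ)) (h : ℝ) :
    ℝ :=
  (μT {ω | (levelComp Gt h ω o ∩ treePlus Gt o obar).Infinite}).toReal

/-- `s_n`. -/
noncomputable def sn (d Nn : ℕ) : ℕ :=
  max 1 ⌊(8 : ℝ) * Real.logb ((d : ℝ) - 1) (Real.logb ((d : ℝ) - 1) (Nn : ℝ))⌋₊

/-- `c₀ = αβ/(d-1)`. -/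
noncomputable def c0 (d : ℕ) (α β : ℝ) : ℝ := α * β / ((d : ℝ) - 1)

/-- `r_n`. -/
noncomputable def rn (d : ℕ) (α β : ℝ) (Nn : ℕ) : ℕ :=
  max 1 ⌊(c0 d α β / 18) * Real.logb ((d : ℝ) - 1) (Nn : ℝ)⌋₊

/-- `R_n`. -/
noncomputable def Rn (d : ℕ) (α β : ℝ) (Nn : ℕ) : ℕ :=
  max 1 ⌊(c0 d α β / 6) * Real.logb ((d : ℝ) - 1) (Nn : ℝ)⌋₊

/-- `F_A(x,s)`: the vertices of `B(A,s) ∖ A` connected to `x` within `B(A,s) ∖ A`. -/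
def Fset (G : SimpleGraph V) (A : Set V) (s : ℕ) (x : V) : Set V :=
  {z | ∃ p : G.Walk x z, ∀ v ∈ p.support, v ∈ sball G A s ∧ v ∉ A}

/-- Good vertex at the boundary of `A`. -/
def GoodVertex (G : SimpleGraph V) (A : Set V) (s : ℕ) (x : V) : Prop :=
  x ∉ A ∧ (∃! y, y ∈ A ∧ G.Adj x y) ∧
    TxZero G (Fset G A s x) ∧
    ∀ y : V, y ∉ A → (∃ a ∈ A, G.Adj y a) → y ≠ x →
      ∀ p : G.Walk y x, (∀ v ∈ p.support, v ∉ A) → ∃ v ∈ p.support, v ∉ sball G A s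

end GFF

/-!
Let `ν` be the harmonic measure of the sphere `S = S(o, R)` seen from `y`, and `g` the Green
function. The harmonic average is `∫ φ dν`, a finite linear combination of values of the field, so
its variance is `∬ g(u, v) dν(u) dν(v)`. For `u ∈ S` the function `g(u, ·)` is superharmonic off
`S`, hence `∫ g(u, v) dν(v) ≤ g(u, y)` by optional stopping. As `d(u, y) ≥ R - d(o, y)`, the
variance is at most the value of `g` at distance `R - d(o, y)`. The walk hits `S` almost surely
because, until it does, `R - d(o, X_k)` is nonnegative and decreases in mean by at least
`(d - 2) / d ≥ 1 / d` per step.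
-/

namespace GFF

section Tree

variable {V : Type*} {G : SimpleGraph V}

lemma eq_of_adj_of_dist_eq_add_one (hG : G.IsTree) {w u v v' : V} (hv : G.Adj u v)
    (hv' : G.Adj u v') (hd : G.dist w u = G.dist w v + 1) (hd' : G.dist w u = G.dist w v' + 1) :
    v = v' := by
  obtain ⟨p, hp⟩ := hG.connected.exists_walk_length_eq_dist w v
  obtain ⟨q, hq⟩ := hG.connected.exists_walk_length_eq_dist w v'
  have hp' : (p.concat hv.symm).IsPath :=
    SimpleGraph.Walk.isPath_of_length_eq_dist _ (by simp [hp, hd])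
  have hq' : (q.concat hv'.symm).IsPath :=
    SimpleGraph.Walk.isPath_of_length_eq_dist _ (by simp [hq, hd'])
  have hpq := (hG.existsUnique_path w u).unique hp' hq'
  simpa using congrArg SimpleGraph.Walk.penultimate hpq

lemma exists_adj_forall_adj_ne_dist_eq_add_one (hG : G.IsTree) (w : V) {u : V}
    (hu : (G.neighborSet u).Nonempty) :
    ∃ v₀, G.Adj u v₀ ∧ ∀ v, G.Adj u v → v ≠ v₀ → G.dist w v = G.dist w u + 1 := by
  by_cases hcloser : ∃ v₀, G.Adj u v₀ ∧ G.dist w u = G.dist w v₀ + 1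
  · obtain ⟨v₀, hv₀, hd₀⟩ := hcloser
    exact ⟨v₀, hv₀, fun v hv hne => (hG.dist_eq_dist_add_one_of_adj w hv).resolve_left
      fun hd => hne (eq_of_adj_of_dist_eq_add_one hG hv hv₀ hd hd₀)⟩
  · obtain ⟨v₀, hv₀⟩ := hu
    exact ⟨v₀, hv₀, fun v hv _ => (hG.dist_eq_dist_add_one_of_adj w hv).resolve_left
      fun hd => hcloser ⟨v, hv, hd⟩⟩

lemma sum_neighborFinset_dist_le [G.LocallyFinite] {M : Type*} [AddCommMonoid M] [PartialOrder M]
    [IsOrderedAddMonoid M] (hG : G.IsTree) (w : V) {u : V} (hu : (G.neighborSet u).Nonempty)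
    {F : ℕ → M} (hF : F (G.dist w u + 1) ≤ F (G.dist w u - 1)) :
    ∑ v ∈ G.neighborFinset u, F (G.dist w v) ≤
      F (G.dist w u - 1) + (G.degree u - 1) • F (G.dist w u + 1) := by
  obtain ⟨v₀, hv₀, hfar⟩ := exists_adj_forall_adj_ne_dist_eq_add_one hG w hu
  have hmem : v₀ ∈ G.neighborFinset u := by simpa using hv₀
  rw [← Finset.add_sum_erase _ _ hmem,
    Finset.sum_eq_card_nsmul (b := F (G.dist w u + 1)), Finset.card_erase_of_mem hmem,
    SimpleGraph.card_neighborFinset_eq_degree]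
  · gcongr
    rcases hG.dist_eq_dist_add_one_of_adj w hv₀ with hd | hd
    · rw [hd, Nat.add_sub_cancel]
    · rwa [hd]
  · intro v hv
    rw [Finset.mem_erase, SimpleGraph.mem_neighborFinset] at hv
    rw [hfar v hv.2 hv.1]

lemma gball_succ_subset (hG : G.Connected) (o : V) (n : ℕ) :
    gball G o (n + 1) ⊆ gball G o n ∪ ⋃ u ∈ gball G o n, G.neighborSet u := by
  intro v hv
  obtain ⟨p, hp⟩ := hG.exists_walk_length_eq_dist o v
  by_cases hnil : p.Nil
  · refine .inl ?_
    change G.dist o v ≤ n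
    rw [← hp, SimpleGraph.Walk.length_eq_zero_iff.2 hnil]
    exact n.zero_le
  · refine .inr (mem_biUnion (x := p.penultimate) ?_ (p.adj_penultimate hnil))
    have hlen := SimpleGraph.dist_le p.dropLast
    have hv' : G.dist o v ≤ n + 1 := hv
    rw [SimpleGraph.Walk.length_dropLast] at hlen
    exact hlen.trans (by omega)

lemma finite_gball [G.LocallyFinite] (hG : G.Connected) (o : V) (R : ℕ) :
    (gball G o R).Finite := by
  induction R with
  | zero =>
    refine (finite_singleton o).subset fun u hu => ?_
    exact (hG.dist_eq_zero_iff.1 (Nat.le_zero.1 hu)).symm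
  | succ n ih =>
    exact (ih.union (ih.biUnion fun u _ => toFinite _)).subset (gball_succ_subset hG o n)

lemma countable_of_connected [G.LocallyFinite] (hG : G.Connected) : Countable V := by
  obtain ⟨o⟩ := hG.nonempty
  have hcover : (univ : Set V) = ⋃ R, gball G o R :=
    (eq_univ_of_forall fun u => mem_iUnion.2 ⟨G.dist o u, le_refl (G.dist o u)⟩).symm
  rw [← countable_univ_iff, hcover]
  exact countable_iUnion fun R => (finite_gball hG o R).countable

end Tree

section Transition

variable {V : Type*} {G : SimpleGraph V} {d : ℕ}

lemma IsReg.finite_neighborSet (hG : IsReg G d) (hd : d ≠ 0) (u : V) :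
    (G.neighborSet u).Finite :=
  finite_of_ncard_ne_zero (by rwa [← Nat.card_coe_set_eq, hG u])

/-- A choice of local finiteness data for a regular graph of positive degree, giving access to
`SimpleGraph.neighborFinset`. -/
noncomputable abbrev IsReg.locallyFinite (hG : IsReg G d) (hd : d ≠ 0) : G.LocallyFinite :=
  fun u => (hG.finite_neighborSet hd u).fintype

lemma IsReg.degree_eq [G.LocallyFinite] (hG : IsReg G d) (u : V) : G.degree u = d := by
  rw [← G.card_neighborSet_eq_degree, ← Nat.card_eq_fintype_card, hG u]

lemma IsRegTree.isTree (hG : IsRegTree G d) : G.IsTree := ⟨hG.1, hG.2.1⟩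

/-- The transition operator of simple random walk on a `d`-regular graph: `transOp G d f u` is the
mean of `f` over the position of the walk one step after it is at `u`. -/
noncomputable def transOp (G : SimpleGraph V) (d : ℕ) (f : V → ℝ≥0∞) (u : V) : ℝ≥0∞ :=
  ∑' v, srwStep G d u v * f v

lemma transOp_eq_sum_neighborFinset [G.LocallyFinite] (f : V → ℝ≥0∞) (u : V) :
    transOp G d f u = (d : ℝ≥0∞)⁻¹ * ∑ v ∈ G.neighborFinset u, f v := by
  rw [transOp, tsum_eq_sum (s := G.neighborFinset u), Finset.mul_sum]
  · refine Finset.sum_congr rfl fun v hv => ?_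
    rw [srwStep, if_pos (by simpa using hv)]
  · intro v hv
    rw [srwStep, if_neg (by simpa using hv), zero_mul]

lemma IsRegTree.transOp_comp_dist_le (hG : IsRegTree G d) (hd : d ≠ 0) (w u : V)
    {F : ℕ → ℝ≥0∞} (hF : F (G.dist w u + 1) ≤ F (G.dist w u - 1)) :
    transOp G d (fun v => F (G.dist w v)) u ≤
      (d : ℝ≥0∞)⁻¹ * (F (G.dist w u - 1) + (d - 1 : ℕ) * F (G.dist w u + 1)) := by
  let _ := hG.2.2.locallyFinite hd
  have hdeg : G.degree u = d := hG.2.2.degree_eq u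
  have hne : (G.neighborSet u).Nonempty :=
    G.degree_pos_iff_nonempty.1 (hdeg ▸ Nat.pos_of_ne_zero hd)
  rw [transOp_eq_sum_neighborFinset, ← nsmul_eq_mul, ← hdeg]
  gcongr
  exact sum_neighborFinset_dist_le hG.isTree w hne hF

/-- The Green function of simple random walk on the `d`-regular tree as a function of the distance
between its two arguments. -/
noncomputable def radialGreen (d n : ℕ) : ℝ :=
  ((d : ℝ) - 1) / ((d : ℝ) - 2) * ((d : ℝ) - 1)⁻¹ ^ n

lemma treeGreen_eq_radialGreen_dist (u v : V) :
    treeGreen G d u v = radialGreen d (G.dist u v) := rfl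

lemma radialGreen_nonneg (hd : 3 ≤ d) (n : ℕ) : 0 ≤ radialGreen d n := by
  have hd' : (3 : ℝ) ≤ d := by exact_mod_cast hd
  exact mul_nonneg (div_nonneg (by linarith) (by linarith))
    (pow_nonneg (inv_nonneg.2 (by linarith)) n)

lemma radialGreen_antitone (hd : 3 ≤ d) : Antitone (radialGreen d) := by
  have hd' : (3 : ℝ) ≤ d := by exact_mod_cast hd
  intro m n hmn
  exact mul_le_mul_of_nonneg_left
    (pow_le_pow_of_le_one (inv_nonneg.2 (by linarith)) (inv_le_one_of_one_le₀ (by linarith)) hmn)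
    (div_nonneg (by linarith) (by linarith))

lemma radialGreen_add_mul (hd : 3 ≤ d) (n : ℕ) :
    radialGreen d n + (d - 1 : ℕ) * radialGreen d (n + 2) = d * radialGreen d (n + 1) := by
  have hd' : (3 : ℝ) ≤ d := by exact_mod_cast hd
  have hinv : ((d : ℝ) - 1) * ((d : ℝ) - 1)⁻¹ = 1 := mul_inv_cancel₀ (by linarith)
  simp only [radialGreen, Nat.cast_sub (show 1 ≤ d by omega), Nat.cast_one]
  linear_combination
    ((d : ℝ) - 1) / ((d : ℝ) - 2) * ((d : ℝ) - 1)⁻¹ ^ n * (((d : ℝ) - 1)⁻¹ - 1) * hinv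

lemma IsRegTree.transOp_treeGreen_le (hG : IsRegTree G d) (hd : 3 ≤ d) {w u : V} (hwu : w ≠ u) :
    transOp G d (fun v => ENNReal.ofReal (treeGreen G d w v)) u ≤
      ENNReal.ofReal (treeGreen G d w u) := by
  obtain ⟨n, hn⟩ := Nat.exists_eq_succ_of_ne_zero (hG.1.pos_dist_of_ne hwu).ne'
  have hstep := hG.transOp_comp_dist_le (by omega) w u
    (F := fun n => ENNReal.ofReal (radialGreen d n))
    (ENNReal.ofReal_le_ofReal (radialGreen_antitone hd (by omega)))
  have hg := congrArg ENNReal.ofReal (radialGreen_add_mul hd n)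
  rw [ENNReal.ofReal_add (radialGreen_nonneg hd n)
      (mul_nonneg (Nat.cast_nonneg _) (radialGreen_nonneg hd _)),
    ENNReal.ofReal_mul (Nat.cast_nonneg _), ENNReal.ofReal_mul (Nat.cast_nonneg _),
    ENNReal.ofReal_natCast, ENNReal.ofReal_natCast] at hg
  simp only [treeGreen_eq_radialGreen_dist]
  simp only [hn, Nat.succ_eq_add_one, Nat.add_sub_cancel, hg] at hstep ⊢
  rwa [ENNReal.inv_mul_cancel_left (by simp; omega) (ENNReal.natCast_ne_top d)] at hstep

/-- The Lyapunov function `R - |v|` on the ball of radius `R` around `o`, for the exit time of the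
walk. Its value `⊤` off the ball makes the drift condition trivial there, so that it need not be
known that the walk stays inside the ball. -/
noncomputable def exitPotential (G : SimpleGraph V) (o : V) (R : ℕ) (v : V) : ℝ≥0∞ :=
  if G.dist o v ≤ R then ((R - G.dist o v : ℕ) : ℝ≥0∞) else ⊤

lemma exitPotential_ne_top {o : V} {R : ℕ} {v : V} (hv : v ∈ gball G o R) :
    exitPotential G o R v ≠ ⊤ := by
  rw [exitPotential, if_pos (show G.dist o v ≤ R from hv)]
  exact ENNReal.natCast_ne_top _

lemma IsRegTree.transOp_exitPotential_add_le (hG : IsRegTree G d) (hd : 3 ≤ d) {o u : V} {R : ℕ}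
    (hu : G.dist o u ≠ R) :
    transOp G d (exitPotential G o R) u + (d : ℝ≥0∞)⁻¹ ≤ exitPotential G o R u := by
  rcases hu.lt_or_gt with hlt | hgt
  · have hstep := hG.transOp_comp_dist_le (by omega) o u
      (F := fun n => if n ≤ R then ((R - n : ℕ) : ℝ≥0∞) else ⊤)
    simp only [show G.dist o u + 1 ≤ R by omega, show G.dist o u - 1 ≤ R by omega, if_true,
      Nat.cast_le] at hstep
    have hdrift : (R - (G.dist o u - 1)) + (d - 1) * (R - (G.dist o u + 1)) + 1 ≤
        d * (R - G.dist o u) := by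
      obtain ⟨m, rfl⟩ := Nat.exists_eq_add_of_lt hlt
      obtain ⟨e, rfl⟩ := Nat.exists_eq_add_of_le hd
      have h₁ : G.dist o u + m + 1 - (G.dist o u - 1) ≤ m + 2 := by omega
      have h₂ : G.dist o u + m + 1 - (G.dist o u + 1) = m := by omega
      have h₃ : G.dist o u + m + 1 - G.dist o u = m + 1 := by omega
      have h₄ : 3 + e - 1 = 2 + e := by omega
      rw [h₂, h₃, h₄]
      linarith
    calc transOp G d (exitPotential G o R) u + (d : ℝ≥0∞)⁻¹
        ≤ (d : ℝ≥0∞)⁻¹ * (((R - (G.dist o u - 1) : ℕ) : ℝ≥0∞) +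
            (d - 1 : ℕ) * (R - (G.dist o u + 1) : ℕ)) + (d : ℝ≥0∞)⁻¹ := by
          gcongr
          exact hstep (by omega)
      _ = (d : ℝ≥0∞)⁻¹ *
            ((R - (G.dist o u - 1)) + (d - 1) * (R - (G.dist o u + 1)) + 1 : ℕ) := by
          push_cast
          ring
      _ ≤ (d : ℝ≥0∞)⁻¹ * (d * (R - G.dist o u) : ℕ) := by gcongr
      _ = exitPotential G o R u := by
          rw [exitPotential, if_pos hlt.le, Nat.cast_mul,
            ENNReal.inv_mul_cancel_left (by simp; omega) (ENNReal.natCast_ne_top d)]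
  · rw [exitPotential, if_neg hgt.not_ge]
    exact le_top

end Transition

section HitTime

variable {V : Type*} {S : Set V} {ω : ℕ → V} {k : ℕ}

lemma natCast_le_hitTime_iff : (k : ℕ∞) ≤ hitTime S ω ↔ ∀ i < k, ω i ∉ S := by
  rw [hitTime, le_sInf_iff, forall_mem_image]
  refine ⟨fun h i hik hi => ?_, fun h i hi => ?_⟩
  · exact (Nat.cast_le.1 (h hi)).not_gt hik
  · exact Nat.cast_le.2 (not_lt.1 fun hik => h i hik hi)

lemma natCast_lt_hitTime_iff : (k : ℕ∞) < hitTime S ω ↔ ∀ i ≤ k, ω i ∉ S := by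
  rw [← ENat.add_one_le_iff (ENat.natCast_ne_top k), ← Nat.cast_succ, natCast_le_hitTime_iff]
  simp only [Nat.lt_succ_iff]

lemma stopAt_mem (h : hitTime S ω ≠ ⊤) : stopAt S ω ∈ S := by
  have hτ : ((hitTime S ω).toNat : ℕ∞) = hitTime S ω := ENat.natCast_toNat h
  have hbefore := natCast_le_hitTime_iff.1 hτ.le
  by_contra hS
  refine (natCast_lt_hitTime_iff.2 fun i hi => ?_).ne hτ
  rcases hi.lt_or_eq with hlt | rfl
  exacts [hbefore i hlt, hS]

/-- The walk frozen at the entrance time of `S`: its position after `k` steps, or at that time if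
this comes first. It is a variant of `MeasureTheory.stoppedProcess` written with `ENat.toNat`, as
`stopAt` is. -/
noncomputable def stoppedWalk (S : Set V) (k : ℕ) (ω : ℕ → V) : V :=
  ω (min (k : ℕ∞) (hitTime S ω)).toNat

lemma stoppedWalk_zero : stoppedWalk S 0 ω = ω 0 := by
  rw [stoppedWalk, Nat.cast_zero, zero_min, ENat.toNat_zero]

lemma stoppedWalk_of_le (h : (k : ℕ∞) ≤ hitTime S ω) : stoppedWalk S k ω = ω k := by
  rw [stoppedWalk, min_eq_left h, ENat.toNat_natCast]

lemma stoppedWalk_of_ge (h : hitTime S ω ≤ k) : stoppedWalk S k ω = stopAt S ω := by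
  rw [stoppedWalk, min_eq_right h, stopAt]

variable [MeasurableSpace V]

lemma measurable_apply_toNat {τ : (ℕ → V) → ℕ∞} (hτ : Measurable τ) :
    Measurable fun ω : ℕ → V => ω (τ ω).toNat :=
  (measurable_from_prod_countable_right (f := fun q : ℕ × (ℕ → V) => q.2 q.1)
    measurable_pi_apply).comp (((Measurable.of_discrete (f := ENat.toNat)).comp hτ).prodMk
      measurable_id)

lemma measurableSet_natCast_le_hitTime (hS : MeasurableSet S) (k : ℕ) :
    MeasurableSet {ω | (k : ℕ∞) ≤ hitTime S ω} := by
  simp only [natCast_le_hitTime_iff, ofPred_forall]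
  exact .iInter fun i => .iInter fun _ => hS.compl.preimage (measurable_pi_apply i)

lemma measurable_hitTime (hS : MeasurableSet S) : Measurable (hitTime S) := by
  refine ENat.measurable_iff.2 fun k => ?_
  have hpre : hitTime S ⁻¹' {(k : ℕ∞)} =
      {ω | (k : ℕ∞) ≤ hitTime S ω} \ {ω | ((k + 1 : ℕ) : ℕ∞) ≤ hitTime S ω} := by
    ext ω
    rw [Nat.cast_succ, mem_preimage, mem_singleton_iff, eq_comm, eq_iff_le_not_lt,
      ← ENat.add_one_le_iff (ENat.natCast_ne_top k)]
    rfl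
  rw [hpre]
  exact (measurableSet_natCast_le_hitTime hS k).diff (measurableSet_natCast_le_hitTime hS (k + 1))

lemma measurable_stopAt (hS : MeasurableSet S) : Measurable (stopAt S) :=
  measurable_apply_toNat (measurable_hitTime hS)

lemma measurable_stoppedWalk (hS : MeasurableSet S) (k : ℕ) : Measurable (stoppedWalk S k) :=
  measurable_apply_toNat
    ((Measurable.of_discrete (f := min (k : ℕ∞))).comp (measurable_hitTime hS))

end HitTime

section Walk

variable {V : Type*} [MeasurableSpace V] {G : SimpleGraph V} {d : ℕ} {W : V → Measure (ℕ → V)}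

lemma IsSRW.measurableSingletonClass [Countable V] (hW : IsSRW G d W) :
    MeasurableSingletonClass V := by
  -- `IsSRW` prescribes cylinder probabilities without assuming that points are measurable. If no
  -- measurable set separated `v` from `u`, the null set `{ω | ω 0 = v}` of `W u` would have no
  -- measurable null superset, as such a set would also contain the full set `{ω | ω 0 = u}`.
  refine ⟨fun v => ?_⟩
  suffices measurableAtom v = {v} from this ▸ MeasurableSet.measurableAtom_of_countable v
  refine (singleton_subset_iff.2 (mem_measurableAtom_self v)).antisymm' fun u hu => ?_
  by_contra huv
  have huv : v ≠ u := fun h => huv h.symm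
  obtain ⟨t, hsub, ht, hnull⟩ : ∃ t, {ω : ℕ → V | ω 0 = v} ⊆ t ∧ MeasurableSet t ∧ W u t = 0 :=
    exists_measurable_superset_of_null (by simpa [huv] using hW.2 u 0 fun _ => v)
  have hmass : W u {ω | ω 0 = u} = 1 := by simpa using hW.2 u 0 fun _ => u
  obtain ⟨ω, hω, hωt⟩ : ∃ ω ∈ {ω : ℕ → V | ω 0 = u}, ω ∉ t := by
    by_contra! hcover
    exact one_ne_zero (hmass.symm.trans (measure_mono_null hcover hnull))
  have hslice : MeasurableSet (Function.update ω 0 ⁻¹' t) := measurable_update ω ht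
  have hv : v ∈ Function.update ω 0 ⁻¹' t := hsub (Function.update_self ..)
  have hu : Function.update ω 0 u ∈ t := mem_of_mem_measurableAtom hu hslice hv
  rw [← show ω 0 = u from hω, Function.update_eq_self] at hu
  exact hωt hu

lemma IsSRW.measure_cylinder_inter_succ (hW : IsSRW G d W) (y : V) (p : ℕ → V) (k : ℕ) (v : V) :
    W y ({ω | ∀ i ≤ k, ω i = p i} ∩ {ω | ω (k + 1) = v}) =
      W y {ω | ∀ i ≤ k, ω i = p i} * srwStep G d (p k) v := by
  have hcyl : {ω : ℕ → V | ∀ i ≤ k, ω i = p i} ∩ {ω | ω (k + 1) = v} =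
      {ω | ∀ i ≤ k + 1, ω i = Function.update p (k + 1) v i} := by
    ext ω
    simp only [mem_inter_iff, mem_ofPred_eq, Nat.le_succ_iff_eq_or_le]
    grind
  have hprod : ∏ i ∈ Finset.range k, srwStep G d (Function.update p (k + 1) v i)
      (Function.update p (k + 1) v (i + 1)) =
        ∏ i ∈ Finset.range k, srwStep G d (p i) (p (i + 1)) :=
    Finset.prod_congr rfl fun i hi => by
      have := Finset.mem_range.1 hi
      rw [Function.update_of_ne (by omega), Function.update_of_ne (by omega)]
  rw [hcyl, hW.2, hW.2, Finset.prod_range_succ, mul_assoc, hprod,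
    Function.update_of_ne (by omega), Function.update_of_ne (by omega), Function.update_self]

variable [MeasurableSingletonClass V]

lemma measurableSet_cylinder (p : ℕ → V) (k : ℕ) :
    MeasurableSet {ω : ℕ → V | ∀ i ≤ k, ω i = p i} := by
  simp only [ofPred_forall]
  exact .iInter fun i => .iInter fun _ =>
    (measurableSet_singleton (p i)).preimage (measurable_pi_apply i)

lemma IsSRW.ae_apply_zero_eq (hW : IsSRW G d W) (y : V) : ∀ᵐ ω ∂W y, ω 0 = y := by
  have := hW.1 y
  have hmass : W y {ω | ω 0 = y} = 1 := by simpa using hW.2 y 0 fun _ => y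
  exact (mem_ae_iff_prob_eq_one
    ((measurableSet_singleton y).preimage (measurable_pi_apply 0))).2 hmass

variable [Countable V]

lemma IsSRW.setLIntegral_cylinder_succ (hW : IsSRW G d W) (y : V) (p : ℕ → V) (k : ℕ)
    (f : V → ℝ≥0∞) :
    ∫⁻ ω in {ω | ∀ i ≤ k, ω i = p i}, f (ω (k + 1)) ∂W y =
      W y {ω | ∀ i ≤ k, ω i = p i} * transOp G d f (p k) := by
  have hnext : Measurable fun ω : ℕ → V => ω (k + 1) := measurable_pi_apply (k + 1)
  rw [← lintegral_map (f := f) Measurable.of_discrete hnext, lintegral_countable', transOp,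
    ← ENNReal.tsum_mul_left]
  refine tsum_congr fun v => ?_
  rw [Measure.map_apply hnext (measurableSet_singleton v),
    Measure.restrict_apply (hnext (measurableSet_singleton v)), inter_comm, ← mul_assoc, mul_comm,
    ← hW.measure_cylinder_inter_succ]
  rfl

lemma IsSRW.setLIntegral_comp_succ (hW : IsSRW G d W) (y : V) (k : ℕ)
    (A : Set (Finset.Iic k → V)) (f : V → ℝ≥0∞) :
    ∫⁻ ω in Preorder.frestrictLe k ⁻¹' A, f (ω (k + 1)) ∂W y =
      ∫⁻ ω in Preorder.frestrictLe k ⁻¹' A, transOp G d f (ω k) ∂W y := by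
  have hmeas (p : Finset.Iic k → V) :
      MeasurableSet (Preorder.frestrictLe (π := fun _ => V) k ⁻¹' {p}) :=
    Preorder.measurable_frestrictLe k (measurableSet_singleton p)
  have hdisj : A.PairwiseDisjoint fun p => Preorder.frestrictLe (π := fun _ => V) k ⁻¹' {p} :=
    fun p _ q _ hpq => (disjoint_singleton.2 hpq).preimage _
  rw [← biUnion_preimage_singleton, lintegral_biUnion A.to_countable (fun p _ => hmeas p) hdisj,
    lintegral_biUnion A.to_countable (fun p _ => hmeas p) hdisj]
  refine tsum_congr fun p => ?_
  rcases (Preorder.frestrictLe (π := fun _ => V) k ⁻¹' {p.1}).eq_empty_or_nonempty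
    with hempty | ⟨q, hq⟩
  · simp only [hempty, Measure.restrict_empty, lintegral_zero_measure]
  · have hfiber : Preorder.frestrictLe (π := fun _ => V) k ⁻¹' {p.1} =
        {ω | ∀ i ≤ k, ω i = q i} := by
      rw [← mem_singleton_iff.1 hq]
      ext ω
      simp [funext_iff]
    have hk : ∫⁻ ω in {ω | ∀ i ≤ k, ω i = q i}, transOp G d f (ω k) ∂W y =
        ∫⁻ _ in {ω | ∀ i ≤ k, ω i = q i}, transOp G d f (q k) ∂W y :=
      setLIntegral_congr_fun (measurableSet_cylinder q k) fun ω hω => by rw [hω k le_rfl]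
    rw [hfiber, hk, setLIntegral_const, hW.setLIntegral_cylinder_succ, mul_comm]

variable {S : Set V} {f : V → ℝ≥0∞} {c : ℝ≥0∞}

lemma IsSRW.lintegral_stoppedWalk_succ_add_le (hW : IsSRW G d W)
    (hf : ∀ u ∉ S, transOp G d f u + c ≤ f u) (y : V) (k : ℕ) :
    ∫⁻ ω, f (stoppedWalk S (k + 1) ω) ∂W y + c * W y {ω | (k : ℕ∞) < hitTime S ω} ≤
      ∫⁻ ω, f (stoppedWalk S k ω) ∂W y := by
  set A : Set (ℕ → V) := {ω | (k : ℕ∞) < hitTime S ω} with hA_def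
  have hA : MeasurableSet A :=
    measurable_hitTime S.to_countable.measurableSet (.of_discrete (s := Ioi (k : ℕ∞)))
  have hA' : A = Preorder.frestrictLe (π := fun _ => V) k ⁻¹' {p | ∀ i, p i ∉ S} := by
    ext ω
    rw [hA_def, mem_ofPred_eq, natCast_lt_hitTime_iff]
    simp
  have hstopped : ∫⁻ ω in Aᶜ, f (stoppedWalk S (k + 1) ω) ∂W y =
      ∫⁻ ω in Aᶜ, f (stoppedWalk S k ω) ∂W y :=
    setLIntegral_congr_fun hA.compl fun ω hω => by
      have hle : hitTime S ω ≤ k := not_lt.1 hω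
      rw [stoppedWalk_of_ge hle, stoppedWalk_of_ge (hle.trans (by simp))]
  have hmoving : ∫⁻ ω in A, f (stoppedWalk S (k + 1) ω) ∂W y + c * W y A ≤
      ∫⁻ ω in A, f (stoppedWalk S k ω) ∂W y :=
    calc ∫⁻ ω in A, f (stoppedWalk S (k + 1) ω) ∂W y + c * W y A
        = ∫⁻ ω in A, f (ω (k + 1)) ∂W y + c * W y A := by
          congr 1
          exact setLIntegral_congr_fun hA fun ω hω => by
            have hlt : (k : ℕ∞) < hitTime S ω := hω
            rw [stoppedWalk_of_le (by exact_mod_cast Order.add_one_le_of_lt hlt)]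
      _ = ∫⁻ ω in A, (transOp G d f (ω k) + c) ∂W y := by
          rw [lintegral_add_right _ measurable_const, setLIntegral_const, hA',
            hW.setLIntegral_comp_succ]
      _ ≤ ∫⁻ ω in A, f (stoppedWalk S k ω) ∂W y := by
          refine setLIntegral_mono' hA fun ω hω => ?_
          rw [stoppedWalk_of_le (le_of_lt hω)]
          exact hf _ (natCast_lt_hitTime_iff.1 hω k le_rfl)
  rw [← lintegral_add_compl _ hA, ← lintegral_add_compl (fun ω => f (stoppedWalk S k ω)) hA,
    hstopped, add_right_comm]
  gcongr

lemma IsSRW.lintegral_stoppedWalk_add_sum_le (hW : IsSRW G d W)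
    (hf : ∀ u ∉ S, transOp G d f u + c ≤ f u) (y : V) (k : ℕ) :
    ∫⁻ ω, f (stoppedWalk S k ω) ∂W y +
      ∑ j ∈ Finset.range k, c * W y {ω | (j : ℕ∞) < hitTime S ω} ≤ f y := by
  have := hW.1 y
  induction k with
  | zero =>
    have h₀ : ∫⁻ ω, f (stoppedWalk S 0 ω) ∂W y = ∫⁻ _, f y ∂W y :=
      lintegral_congr_ae ((hW.ae_apply_zero_eq y).mono fun ω hω => by
        simp only [stoppedWalk_zero, hω])
    rw [h₀, Finset.range_zero, Finset.sum_empty, add_zero, lintegral_const, measure_univ, mul_one]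
  | succ k ih =>
    rw [Finset.sum_range_succ, add_comm (∑ j ∈ _, _), ← add_assoc]
    exact (add_le_add_left (hW.lintegral_stoppedWalk_succ_add_le hf y k) _).trans ih

lemma IsSRW.ae_hitTime_ne_top (hW : IsSRW G d W) (hf : ∀ u ∉ S, transOp G d f u + c ≤ f u)
    (hc : c ≠ 0) {y : V} (hy : f y ≠ ⊤) : ∀ᵐ ω ∂W y, hitTime S ω ≠ ⊤ := by
  set p := W y {ω | hitTime S ω = ⊤}
  have hp (j : ℕ) : p ≤ W y {ω | (j : ℕ∞) < hitTime S ω} :=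
    measure_mono fun ω (hω : hitTime S ω = ⊤) =>
      (ENat.natCast_lt_top j).trans_eq hω.symm
  have hsum : ∑' _ : ℕ, c * p ≤ f y :=
    ENNReal.tsum_le_of_sum_range_le fun k => calc
      ∑ _ ∈ Finset.range k, c * p
          ≤ ∑ j ∈ Finset.range k, c * W y {ω | (j : ℕ∞) < hitTime S ω} := by
            gcongr; exact hp _
      _ ≤ f y := le_add_self.trans (hW.lintegral_stoppedWalk_add_sum_le hf y k)
  have hzero : c * p = 0 := by
    by_contra h
    exact hy (top_le_iff.1 ((ENNReal.tsum_const_eq_top_of_ne_zero h).symm.trans_le hsum))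
  simpa [ae_iff] using (mul_eq_zero.1 hzero).resolve_left hc

lemma IsSRW.lintegral_stopAt_le (hW : IsSRW G d W) (hf : ∀ u ∉ S, transOp G d f u ≤ f u) {y : V}
    (hit : ∀ᵐ ω ∂W y, hitTime S ω ≠ ⊤) : ∫⁻ ω, f (stopAt S ω) ∂W y ≤ f y := by
  have hmeas (k : ℕ) : Measurable fun ω => f (stoppedWalk S k ω) :=
    Measurable.of_discrete.comp (measurable_stoppedWalk S.to_countable.measurableSet k)
  have hlim : ∀ᵐ ω ∂W y, f (stopAt S ω) = liminf (fun k => f (stoppedWalk S k ω)) atTop := by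
    filter_upwards [hit] with ω hω
    refine (Tendsto.liminf_eq (tendsto_const_nhds.congr' ?_)).symm
    filter_upwards [eventually_ge_atTop (hitTime S ω).toNat] with k hk
    have hle : hitTime S ω ≤ k := (ENat.natCast_toNat hω).symm.trans_le (Nat.cast_le.2 hk)
    rw [stoppedWalk_of_ge hle]
  have hbound (k : ℕ) : ∫⁻ ω, f (stoppedWalk S k ω) ∂W y ≤ f y := by
    simpa using hW.lintegral_stoppedWalk_add_sum_le (c := 0) (by simpa using hf) y k
  calc ∫⁻ ω, f (stopAt S ω) ∂W y
      = ∫⁻ ω, liminf (fun k => f (stoppedWalk S k ω)) atTop ∂W y := lintegral_congr_ae hlim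
    _ ≤ liminf (fun k => ∫⁻ ω, f (stoppedWalk S k ω) ∂W y) atTop := lintegral_liminf_le hmeas
    _ ≤ f y := liminf_le_of_le (by isBoundedDefault) fun b hb => by
        obtain ⟨k, hk⟩ := hb.exists
        exact hk.trans (hbound k)

end Walk

section HarmonicMeasure

variable {V : Type*} [MeasurableSpace V] [Countable V] [MeasurableSingletonClass V]
  {G : SimpleGraph V} {d : ℕ} {W : V → Measure (ℕ → V)} {S : Set V} {y : V}

/-- The harmonic measure of `S` seen from `y`: the law of the vertex at which the walk started at
`y` enters `S`. -/
noncomputable def harmonicMeasure (W : V → Measure (ℕ → V)) (S : Set V) (y : V) : Measure V :=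
  (W y).map (stopAt S)

lemma integral_harmonicMeasure (φ : V → ℝ) :
    ∫ v, φ v ∂harmonicMeasure W S y = ∫ ω, φ (stopAt S ω) ∂W y :=
  integral_map (measurable_stopAt S.to_countable.measurableSet).aemeasurable
    Measurable.of_discrete.aestronglyMeasurable

lemma IsSRW.isProbabilityMeasure_harmonicMeasure (hW : IsSRW G d W) :
    IsProbabilityMeasure (harmonicMeasure W S y) :=
  have := hW.1 y
  Measure.isProbabilityMeasure_map (measurable_stopAt S.to_countable.measurableSet).aemeasurable

lemma ae_mem_harmonicMeasure (hit : ∀ᵐ ω ∂W y, hitTime S ω ≠ ⊤) :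
    ∀ᵐ v ∂harmonicMeasure W S y, v ∈ S :=
  (ae_map_iff (measurable_stopAt S.to_countable.measurableSet).aemeasurable
    S.to_countable.measurableSet).2 (hit.mono fun _ => stopAt_mem)

lemma IsSRW.integral_harmonicMeasure_le (hW : IsSRW G d W) {f : V → ℝ} (hf₀ : ∀ v, 0 ≤ f v)
    (hf : ∀ u ∉ S, transOp G d (fun v => ENNReal.ofReal (f v)) u ≤ ENNReal.ofReal (f u))
    (hit : ∀ᵐ ω ∂W y, hitTime S ω ≠ ⊤) :
    ∫ v, f v ∂harmonicMeasure W S y ≤ f y := by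
  rw [integral_harmonicMeasure, integral_eq_lintegral_of_nonneg_ae (.of_forall fun _ => hf₀ _)
    (Measurable.of_discrete.comp
      (measurable_stopAt S.to_countable.measurableSet)).aestronglyMeasurable]
  exact ENNReal.toReal_le_of_le_ofReal (hf₀ y) (hW.lintegral_stopAt_le hf hit)

end HarmonicMeasure

section GaussianField

variable {I : Type*} {μ : Measure (I → ℝ)} {K : I → I → ℝ}

lemma IsGaussianField.variance_sum (hμ : IsGaussianField μ K) (s : Finset I) (c : I → ℝ) :
    Var[fun ω => ∑ i ∈ s, c i * ω i; μ] = max (∑ i ∈ s, ∑ j ∈ s, c i * c j * K i j) 0 := by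
  have hlaw := hμ.2 (Finsupp.indicator s fun i _ => c i)
  have hsum (ω : I → ℝ) : (Finsupp.indicator s fun i _ => c i).sum (fun i a => a * ω i) =
      ∑ i ∈ s, c i * ω i :=
    Finsupp.sum_indicator_index _ fun i _ => zero_mul (ω i)
  have hcov : (Finsupp.indicator s fun i _ => c i).sum (fun i a =>
      (Finsupp.indicator s fun j _ => c j).sum fun j b => a * b * K i j) =
        ∑ i ∈ s, ∑ j ∈ s, c i * c j * K i j := by
    rw [Finsupp.sum_indicator_index _ fun i _ => by simp]
    exact Finset.sum_congr rfl fun i _ => Finsupp.sum_indicator_index _ fun j _ => by simp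
  simp only [Finsupp.sum] at hsum hcov
  simp only [hsum, hcov] at hlaw
  have hcoord (i : I) : Measurable fun ω : I → ℝ => ω i := measurable_pi_apply i
  have hmeas : Measurable fun ω : I → ℝ => ∑ i ∈ s, c i * ω i :=
    Finset.measurable_sum s fun i _ => (hcoord i).const_mul (c i)
  rw [← Real.coe_toNNReal', ← variance_id_gaussianReal (μ := 0), ← hlaw,
    variance_map aemeasurable_id hmeas.aemeasurable]
  rfl

variable [MeasurableSpace I] [MeasurableSingletonClass I] {ν : Measure I} [IsFiniteMeasure ν]

lemma integral_eq_sum_of_ae_mem {s : Finset I} (hν : ∀ᵐ i ∂ν, i ∈ s) (φ : I → ℝ) :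
    ∫ i, φ i ∂ν = ∑ i ∈ s, ν.real {i} * φ i := by
  have hs : ν.restrict s = ν := Measure.restrict_eq_self_of_ae_mem hν
  simpa [hs] using setIntegral_finset (μ := ν) (f := φ) s .finset

lemma IsGaussianField.variance_integral (hμ : IsGaussianField μ K) {s : Finset I}
    (hν : ∀ᵐ i ∂ν, i ∈ s) :
    Var[fun ω => ∫ i, ω i ∂ν; μ] = max (∫ i, ∫ j, K i j ∂ν ∂ν) 0 := by
  simp only [integral_eq_sum_of_ae_mem hν, hμ.variance_sum, Finset.mul_sum, mul_assoc]

end GaussianField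

section Variance

variable {V : Type*} [MeasurableSpace V] [Countable V] [MeasurableSingletonClass V]
  {G : SimpleGraph V} {d : ℕ} {W : V → Measure (ℕ → V)} {S : Set V} {y : V}

lemma IsSRW.variance_integral_stopAt_le (hW : IsSRW G d W) {μ : Measure (V → ℝ)} {K : V → V → ℝ}
    (hμ : IsGaussianField μ K) (hS : S.Finite) (hit : ∀ᵐ ω ∂W y, hitTime S ω ≠ ⊤)
    (hK₀ : ∀ u v, 0 ≤ K u v) (hK : ∀ u ∈ S, ∀ v ∉ S,
      transOp G d (fun z => ENNReal.ofReal (K u z)) v ≤ ENNReal.ofReal (K u v))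
    {M : ℝ} (hM : ∀ u ∈ S, K u y ≤ M) :
    Var[fun φ => ∫ ω, φ (stopAt S ω) ∂W y; μ] ≤ M := by
  have := hW.isProbabilityMeasure_harmonicMeasure (S := S) (y := y)
  have hmem := ae_mem_harmonicMeasure hit
  calc Var[fun φ => ∫ ω, φ (stopAt S ω) ∂W y; μ]
      = ∫ u, ∫ v, K u v ∂harmonicMeasure W S y ∂harmonicMeasure W S y := by
        rw [← max_eq_left (integral_nonneg fun u => integral_nonneg (hK₀ u)),
          ← hμ.variance_integral (s := hS.toFinset) (by simpa using hmem)]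
        simp only [integral_harmonicMeasure]
    _ ≤ ∫ _, M ∂harmonicMeasure W S y :=
        integral_mono_of_nonneg (.of_forall fun u => integral_nonneg (hK₀ u)) (integrable_const M)
          (hmem.mono fun u hu =>
            (hW.integral_harmonicMeasure_le (hK₀ u) (hK u hu) hit).trans (hM u hu))
    _ = M := by rw [integral_const, probReal_univ, one_smul]

end Variance

section Sphere

variable {T : Type*} [MeasurableSpace T] {G : SimpleGraph T} {d R : ℕ} {o y : T}
  {W : T → Measure (ℕ → T)}

lemma IsRegTree.ae_hitTime_sphere_ne_top (hG : IsRegTree G d) (hd : 3 ≤ d) (hW : IsSRW G d W)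
    (hy : y ∈ gball G o R) : ∀ᵐ ω ∂W y, hitTime {u | G.dist o u = R} ω ≠ ⊤ := by
  let _ := hG.2.2.locallyFinite (by omega)
  have := countable_of_connected hG.1
  have := hW.measurableSingletonClass
  exact hW.ae_hitTime_ne_top (fun u hu => hG.transOp_exitPotential_add_le hd hu)
    (ENNReal.inv_ne_zero.2 (ENNReal.natCast_ne_top d)) (exitPotential_ne_top hy)

lemma radialGreen_sub_le (hd : 3 ≤ d) {n : ℕ} (hn : n ≤ R) :
    radialGreen d (R - n) ≤ (d : ℝ) ^ 2 / (((d : ℝ) - 1) * ((d : ℝ) - 2)) *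
      ((d : ℝ) - 1)⁻¹ ^ ((R : ℤ) - 2 * n) := by
  have hd' : (3 : ℝ) ≤ d := by exact_mod_cast hd
  have hconst : ((d : ℝ) - 1) / ((d : ℝ) - 2) ≤ (d : ℝ) ^ 2 / (((d : ℝ) - 1) * ((d : ℝ) - 2)) := by
    rw [← div_div]
    gcongr
    · linarith
    · rw [le_div_iff₀ (by linarith)]
      nlinarith
  have hpow : ((d : ℝ) - 1)⁻¹ ^ (R - n) ≤ ((d : ℝ) - 1)⁻¹ ^ ((R : ℤ) - 2 * n) := by
    rw [← zpow_natCast]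
    exact zpow_le_zpow_right_of_le_one₀ (inv_pos.2 (by linarith))
      (inv_le_one_of_one_le₀ (by linarith)) (by omega)
  exact mul_le_mul hconst hpow (pow_nonneg (inv_nonneg.2 (by linarith)) _)
    (div_nonneg (sq_nonneg _) (mul_nonneg (by linarith) (by linarith)))

end Sphere

end GFF

theorem tree_sphere_harmonic_variance_bound_general {d : ℕ} (hd : 3 ≤ d)
    {T : Type*} [MeasurableSpace T] {G : SimpleGraph T} {o : T} (hG : GFF.IsRegTree G d)
    {W : T → Measure (ℕ → T)} (hW : GFF.IsSRW G d W)
    {μ : Measure (T → ℝ)} (hμ : GFF.IsGaussianField μ (GFF.treeGreen G d))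
    {R : ℕ} {y : T} (hy : y ∈ GFF.gball G o R) :
    variance (fun ω => ∫ p, ω (GFF.stopAt {u | G.dist o u = R} p) ∂W y) μ ≤
      GFF.radialGreen d (R - G.dist o y) := by
  let _ := hG.2.2.locallyFinite (by omega)
  have := GFF.countable_of_connected hG.1
  have := hW.measurableSingletonClass
  refine hW.variance_integral_stopAt_le hμ
    ((GFF.finite_gball hG.1 o R).subset fun u hu => le_of_eq hu)
    (hG.ae_hitTime_sphere_ne_top hd hW hy) (fun _ _ => GFF.radialGreen_nonneg hd _)
    (fun u hu v hv => hG.transOp_treeGreen_le hd fun h => hv (h ▸ hu)) fun u hu => ?_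
  have hu : G.dist o u = R := hu
  have htri := hG.1.dist_triangle (u := o) (v := y) (w := u)
  exact GFF.radialGreen_antitone hd (by rw [G.dist_comm (u := u)]; omega)

/-- variance bound for the harmonic average of the tree GFF on a sphere. -/
theorem tree_sphere_harmonic_variance_bound
    (d : ℕ) (hd : 3 ≤ d)
    (T : Type) [MeasurableSpace T]
    (Gt : SimpleGraph T) (o : T) (htree : GFF.IsRegTree Gt d)
    (W : T → Measure (ℕ → T)) (hW : GFF.IsSRW Gt d W)
    (μT : Measure (T → ℝ)) (hμT : GFF.IsGaussianField μT (GFF.treeGreen Gt d))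
    (R : ℕ) (hR : 1 ≤ R) (y : T) (hy : y ∈ GFF.gball Gt o R) :
    variance (fun ω => ∫ p, ω (GFF.stopAt {u : T | Gt.dist o u = R} p) ∂ W y) μT ≤
      ((d : ℝ) ^ 2 / (((d : ℝ) - 1) * ((d : ℝ) - 2))) *
        (((d : ℝ) - 1)⁻¹) ^ ((R : ℤ) - 2 * (Gt.dist y o : ℤ)) := by
  rw [Gt.dist_comm (u := y)]
  exact (tree_sphere_harmonic_variance_bound_general hd htree hW hμT hy).trans
    (GFF.radialGreen_sub_le hd hy)
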